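/- Let R be a U-WLL DCTRS over a signature F, t a reachable term in T(F̄,V), w a linear term in T(F,V), w' = ext(w), and θ a substitution over F̄. If t →*_{SR(R)} w'θ, then there exists a substitution σ such that t = w'σ and xσ →*_{SR(R)} xθ for all variables x ∈ Var(w). -/

import Mathlib

set_option autoImplicit false

/-- First-order terms over a signature `F` and variables `V`. -/
inductive Term (F : Type) (V : Type) : Type where
  | var : V → Term F V
  | app : F → List (Term F V) → Term F V

namespace Term

variable {F V G W : Type}

/-- Application of a substitution. -/
def subst (σ : V → Term F W) : Term F V → Term F W
  | .var x => σ x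
  | .app f ts => .app f (ts.attach.map (fun ⟨t, _⟩ => subst σ t))

/-- Renaming of variables. -/
def rename (g : V → W) (t : Term F V) : Term F W := t.subst (fun x => .var (g x))

/-- Mapping of function symbols. -/
def mapF (g : F → G) : Term F V → Term G V
  | .var x => .var x
  | .app f ts => .app (g f) (ts.attach.map (fun ⟨t, _⟩ => mapF g t))

/-- Number of occurrences of the variable `x` in a term. -/
def count [DecidableEq V] (x : V) : Term F V → ℕ
  | .var y => if y = x then 1 else 0
  | .app _ ts => (ts.attach.map (fun ⟨t, _⟩ => count x t)).sum

/-- The list of variables occurring in a term (with repetitions). -/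
def varList : Term F V → List V
  | .var x => [x]
  | .app _ ts => ts.attach.flatMap (fun ⟨t, _⟩ => varList t)

/-- A term is linear if every variable occurs at most once in it. -/
def Linear [DecidableEq V] (t : Term F V) : Prop := ∀ x : V, t.count x ≤ 1

/-- Well-formedness of a term with respect to an arity assignment. -/
inductive WF (ar : F → ℕ) : Term F V → Prop where
  | var (x : V) : WF ar (.var x)
  | app (f : F) (ts : List (Term F V)) :
      ts.length = ar f → (∀ t ∈ ts, WF ar t) → WF ar (.app f ts)

end Term

/-- Number of occurrences of `x` in a sequence of terms. -/
def seqCount {F V : Type} [DecidableEq V] (x : V) (ts : List (Term F V)) : ℕ :=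
  (ts.map (Term.count x)).sum

/-- An oriented conditional rewrite rule `l → r ⇐ s1 ≈ t1, …, sk ≈ tk`. -/
structure CRule (F V : Type) : Type where
  lhs : Term F V
  rhs : Term F V
  conds : List (Term F V × Term F V)

/-- A conditional term rewriting system: a set of conditional rules. -/
abbrev CTRS (F V : Type) := Set (CRule F V)

namespace CRule

variable {F V W : Type}

/-- The sequence `l, t1, …, tk` of "pattern" terms of a rule. -/
def pats (ρ : CRule F V) : List (Term F V) := ρ.lhs :: ρ.conds.map Prod.snd

/-- The sequence `r, s1, …, sk` of "source" terms of a rule. -/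
def srcs (ρ : CRule F V) : List (Term F V) := ρ.rhs :: ρ.conds.map Prod.fst

/-- Weak left-linearity: `|l,t1,…,tk|_x = 1` for every `x ∈ Var(r,s1,…,sk)`. -/
def WLL [DecidableEq V] (ρ : CRule F V) : Prop :=
  ∀ x : V, 0 < seqCount x ρ.srcs → seqCount x ρ.pats = 1

/-- Determinism: `Var(si) ⊆ Var(l, t1, …, t_{i−1})`. -/
def Det [DecidableEq V] (ρ : CRule F V) : Prop :=
  ∀ i : ℕ, ∀ h : i < ρ.conds.length, ∀ x : V,
    0 < Term.count x (ρ.conds.get ⟨i, h⟩).1 →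
    0 < seqCount x (ρ.lhs :: (ρ.conds.take i).map Prod.snd)

/-- Type 3: `Var(r) ⊆ Var(l, s1, t1, …, sk, tk)`. -/
def Type3 [DecidableEq V] (ρ : CRule F V) : Prop :=
  ∀ x : V, 0 < Term.count x ρ.rhs →
    0 < seqCount x (ρ.lhs :: ρ.conds.flatMap (fun c => [c.1, c.2]))

/-- The left-hand side is a non-variable term. -/
def LhsNonVar (ρ : CRule F V) : Prop := ∀ x : V, ρ.lhs ≠ .var x

/-- Renaming the variables of a rule. -/
def mapV (g : V → W) (ρ : CRule F V) : CRule F W :=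
  ⟨ρ.lhs.rename g, ρ.rhs.rename g, ρ.conds.map (fun c => (c.1.rename g, c.2.rename g))⟩

end CRule

/-- `R` is a deterministic CTRS (of Type 3, left-hand sides non-variable). -/
def IsDCTRS {F V : Type} [DecidableEq V] (R : CTRS F V) : Prop :=
  ∀ ρ ∈ R, ρ.Det ∧ ρ.Type3 ∧ ρ.LhsNonVar

/-- All rules of `R` are weakly left-linear. -/
def IsWLL {F V : Type} [DecidableEq V] (R : CTRS F V) : Prop := ∀ ρ ∈ R, ρ.WLL

/-- Closure of a relation under contexts (rewriting below the root). -/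
inductive CtxStep {F V : Type} (root : Term F V → Term F V → Prop) :
    Term F V → Term F V → Prop where
  | root {s t : Term F V} : root s t → CtxStep root s t
  | congr {f : F} {pre post : List (Term F V)} {s t : Term F V} :
      CtxStep root s t →
      CtxStep root (.app f (pre ++ s :: post)) (.app f (pre ++ t :: post))

/-- A root rewrite step using a rule of `R`, conditions evaluated with `prev`. -/
def RootStep {F V : Type} (R : CTRS F V) (prev : Term F V → Term F V → Prop)
    (s t : Term F V) : Prop :=
  ∃ ρ ∈ R, ∃ σ : V → Term F V,
    s = ρ.lhs.subst σ ∧ t = ρ.rhs.subst σ ∧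
    ∀ c ∈ ρ.conds, Relation.ReflTransGen prev (c.1.subst σ) (c.2.subst σ)

/-- The level-stratified reduction relation `→_{(n),R}`. -/
def LevelStep {F V : Type} (R : CTRS F V) : ℕ → Term F V → Term F V → Prop
  | 0 => fun _ _ => False
  | n + 1 => CtxStep (RootStep R (LevelStep R n))

/-- The reduction relation `→_R = ⋃_{n} →_{(n),R}`. -/
def Red {F V : Type} (R : CTRS F V) (s t : Term F V) : Prop :=
  ∃ n : ℕ, LevelStep R n s t

/-- Many-step reduction `→*_R`. -/
def RedStar {F V : Type} (R : CTRS F V) : Term F V → Term F V → Prop :=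
  Relation.ReflTransGen (Red R)

/-- `n`-fold composition of a relation. -/
def NFold {α : Type} (r : α → α → Prop) : ℕ → α → α → Prop
  | 0 => fun a b => a = b
  | n + 1 => fun a c => ∃ b, r a b ∧ NFold r n b c

/-- One-hole contexts. -/
inductive Ctx (F V : Type) : Type where
  | hole : Ctx F V
  | app : F → List (Term F V) → Ctx F V → List (Term F V) → Ctx F V

/-- Filling the hole of a context with a term. -/
def Ctx.fill {F V : Type} : Ctx F V → Term F V → Term F V
  | .hole, t => t
  | .app f pre C post, t => .app f (pre ++ C.fill t :: post)
/-- Signature extended with the fresh symbols `U^ρ_i`. -/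
abbrev UF (F V : Type) := F ⊕ (CRule F V × ℕ)

/-- Embedding of terms over `F` into terms over the extended signature `U_R(F)`. -/
def liftF {F V : Type} (t : Term F V) : Term (UF F V) V := t.mapF Sum.inl

/-- The list `X⃗_i` enumerating `Var(l, t1, …, t_{i−1})` in a fixed order. -/
def Xlist {F V : Type} [DecidableEq V] (ρ : CRule F V) (i : ℕ) : List V :=
  (ρ.lhs.varList ++ ((ρ.conds.take (i - 1)).map Prod.snd).flatMap Term.varList).dedup

/-- A dummy condition (used as a default, never relevant). -/
def dummyCond {F V : Type} (ρ : CRule F V) : Term F V × Term F V := (ρ.lhs, ρ.lhs)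

/-- The term `U^ρ_i(t, X⃗_i)`. -/
def uterm {F V : Type} [DecidableEq V] (ρ : CRule F V) (i : ℕ) (t : Term F V) :
    Term (UF F V) V :=
  .app (Sum.inr (ρ, i)) (liftF t :: (Xlist ρ i).map Term.var)

/-- Left-hand side of the `j`-th unraveled rule of `ρ` (j = 0, …, k). -/
def ulhs {F V : Type} [DecidableEq V] (ρ : CRule F V) (j : ℕ) : Term (UF F V) V :=
  if j = 0 then liftF ρ.lhs
  else uterm ρ j (ρ.conds.getD (j - 1) (dummyCond ρ)).2

/-- Right-hand side of the `j`-th unraveled rule of `ρ` (j = 0, …, k). -/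
def urhs {F V : Type} [DecidableEq V] (ρ : CRule F V) (j : ℕ) : Term (UF F V) V :=
  if j = ρ.conds.length then liftF ρ.rhs
  else uterm ρ (j + 1) (ρ.conds.getD j (dummyCond ρ)).1

/-- The unconditional rules `U(ρ)` obtained by unraveling the rule `ρ`. -/
def URules {F V : Type} [DecidableEq V] (ρ : CRule F V) : Set (CRule (UF F V) V) :=
  { r | ∃ j ≤ ρ.conds.length, r = ⟨ulhs ρ j, urhs ρ j, []⟩ }

/-- The simultaneous unraveling `U(R)` of a DCTRS `R`. -/
def USys {F V : Type} [DecidableEq V] (R : CTRS F V) : CTRS (UF F V) V :=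
  ⋃ ρ ∈ R, URules ρ

/-- `R` is ultra-WLL (`U`-WLL): every rule of `U(R)` is WLL. -/
def IsUWLL {F V : Type} [DecidableEq V] (R : CTRS F V) : Prop :=
  ∀ r ∈ USys R, r.WLL
/-- Variables used for terms over the extended signature `F̄`: original
variables plus a countable supply of fresh variables. -/
abbrev WVar (V : Type) := V ⊕ ℕ

/-- The extended signature `F̄` of the SR transformation: the original symbols
(`c̄` for constructors, `f̄` for defined symbols, with extra arguments appended),
the fresh constant `⊥`, the fresh unary symbol `⟨·⟩`, and the fresh tuple
symbols `[ ]^ρ_j`. -/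
inductive SSym (F V : Type) : Type where
  | orig : F → SSym F V
  | bot : SSym F V
  | guard : SSym F V
  | tup : CRule F V → ℕ → SSym F V

/-- Terms over the extended signature `F̄`. -/
abbrev STerm (F V : Type) := Term (SSym F V) (WVar V)

/-- The fresh constant `⊥`. -/
def botT {F V : Type} : STerm F V := .app .bot []

/-- The fresh unary symbol `⟨·⟩`. -/
def guardT {F V : Type} (t : STerm F V) : STerm F V := .app .guard [t]

/-- `t̄`: the embedding of `t ∈ T(F,V)` into `T(F̄,V)` in which all the extra
arguments of defined symbols are filled with `⊥`.  Here `mOf f` is the number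
of conditional `f`-rules (0 for constructors). -/
def barT {F V : Type} (mOf : F → ℕ) : Term F V → STerm F V
  | .var x => .var (Sum.inl x)
  | .app f ts =>
      .app (.orig f)
        ((ts.attach.map (fun ⟨t, _⟩ => barT mOf t)) ++ List.replicate (mOf f) botT)

mutual
/-- `ext(t)`: the embedding of `t ∈ T(F,V)` into `T(F̄,V)` in which the extra
arguments of defined symbols are filled with distinct fresh variables; a
counter is threaded through to keep the fresh variables distinct. -/
def extT {F V : Type} (mOf : F → ℕ) : Term F V → ℕ → STerm F V × ℕ
  | .var x, c => (.var (Sum.inl x), c)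
  | .app f ts, c =>
      let p := extTList mOf ts c
      (.app (.orig f)
         (p.1 ++ (List.range (mOf f)).map (fun k => .var (Sum.inr (p.2 + k)))),
       p.2 + mOf f)

/-- `ext` on lists of terms, threading the fresh-variable counter. -/
def extTList {F V : Type} (mOf : F → ℕ) : List (Term F V) → ℕ → List (STerm F V) × ℕ
  | [], c => ([], c)
  | t :: ts, c =>
      let p := extT mOf t c
      let q := extTList mOf ts p.2
      (p.1 :: q.1, q.2)
end

/-- The backtranslation `t̂`: the partial mapping erasing `⟨·⟩` and the extra
arguments of defined symbols, recovering a term over `F`. -/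
def hatT {F V : Type} (ar : F → ℕ) : STerm F V → Option (Term F V)
  | .var (Sum.inl x) => some (.var x)
  | .var (Sum.inr _) => none
  | .app (.orig f) ts =>
      Option.map (Term.app f)
        ((ts.take (ar f)).attach.mapM (fun t => hatT ar t.1))
  | .app .guard [t] => hatT ar t
  | .app _ _ => none
decreasing_by
  · have h1 : t.1 ∈ ts := List.mem_of_mem_take t.2
    have := List.sizeOf_lt_of_mem h1
    simp only [Term.app.sizeOf_spec]
    omega
  · simp
    omega

/-- Embedding of `T(F,V)` into the terms over the unraveling signature
`U_R(F)` with extended variables. -/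
def liftUV {F V : Type} (t : Term F V) : Term (UF F V) (WVar V) :=
  (t.mapF Sum.inl).rename Sum.inl
/-- The list `V⃗_j` enumerating `Var(t1, …, t_{j−1})` in a fixed order. -/
def Vlist {F V : Type} [DecidableEq V] (ρ : CRule F V) (j : ℕ) : List V :=
  (((ρ.conds.take (j - 1)).map Prod.snd).flatMap Term.varList).dedup

/-- The term `[⟨inner⟩, V⃗_j]^ρ_j` (used in the rewrite rules of `SR(R)`). -/
def tupT {F V : Type} [DecidableEq V] (ρ : CRule F V) (j : ℕ) (inner : STerm F V) :
    STerm F V :=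
  .app (.tup ρ j) (guardT inner :: (Vlist ρ j).map (fun v => .var (Sum.inl v)))

/-- The `j`-th unconditional rule (j = 0, …, k) obtained by the SR
transformation from the `i`-th conditional `f`-rule
`ρ : f(w1,…,wn) → r ⇐ s1 ≈ t1, …, sk ≈ tk` (where `i = idx ρ`). -/
def condSRRule {F V : Type} [DecidableEq V] (mOf : F → ℕ) (idx : CRule F V → ℕ)
    (ρ : CRule F V) (j : ℕ) : CRule (SSym F V) (WVar V) :=
  match ρ.lhs with
  | .var _ => ⟨barT mOf ρ.lhs, barT mOf ρ.rhs, []⟩  -- irrelevant (lhs is never a variable)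
  | .app f ws =>
    let i := idx ρ
    let m := mOf f
    let p := extTList mOf ws 0
    let ws' := p.1
    let c0 := p.2
    let slot : STerm F V → List (STerm F V) := fun mid =>
      (List.range m).map (fun q => if q = i - 1 then mid else .var (Sum.inr (c0 + q)))
    let k := ρ.conds.length
    ⟨(if j = 0 then
        Term.app (SSym.orig f) (ws' ++ slot botT)
      else
        Term.app (SSym.orig f)
          (ws' ++ slot (tupT ρ j (extT mOf (ρ.conds.getD (j - 1) (dummyCond ρ)).2 (c0 + m)).1))),
     (if j = k then
        guardT (barT mOf ρ.rhs)
      else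
        Term.app (SSym.orig f)
          (ws' ++ slot (tupT ρ (j + 1) (barT mOf (ρ.conds.getD j (dummyCond ρ)).1)))),
     []⟩

/-- The unconditional rule `ext(l) → ⟨r̄⟩` obtained by the SR transformation
from an unconditional rule `l → r`. -/
def uncondSRRule {F V : Type} (mOf : F → ℕ) (ρ : CRule F V) : CRule (SSym F V) (WVar V) :=
  ⟨(extT mOf ρ.lhs 0).1, guardT (barT mOf ρ.rhs), []⟩

/-- The auxiliary rule `⟨⟨x⟩⟩ → ⟨x⟩`. -/
def auxGuard {F V : Type} : CRule (SSym F V) (WVar V) :=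
  ⟨guardT (guardT (.var (Sum.inr 0))), guardT (.var (Sum.inr 0)), []⟩

/-- The auxiliary rule shifting `⟨·⟩` upward over the `i`-th argument of the
symbol `f` (and resetting the extra arguments of defined symbols):
`f̄(x1,…,⟨xi⟩,…,xn, z1,…,zm) → ⟨f̄(x1,…,xn, ⊥,…,⊥)⟩`. -/
def auxShift {F V : Type} (ar mOf : F → ℕ) (f : F) (i : ℕ) : CRule (SSym F V) (WVar V) :=
  ⟨Term.app (SSym.orig f)
     (((List.range (ar f)).map
         (fun q => if q = i then guardT (.var (Sum.inr q)) else .var (Sum.inr q))) ++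
      (List.range (mOf f)).map (fun q => .var (Sum.inr (ar f + q)))),
   guardT (Term.app (SSym.orig f)
     (((List.range (ar f)).map (fun q => Term.var (Sum.inr q))) ++
      List.replicate (mOf f) botT)),
   []⟩

/-- The SR transformation `SR(R)`: the unconditional TRS over `F̄` consisting of
the transformed rules of `R` together with the auxiliary rules `R_aux`. -/
def SRSys {F V : Type} [DecidableEq V] (R : CTRS F V) (ar mOf : F → ℕ)
    (idx : CRule F V → ℕ) : CTRS (SSym F V) (WVar V) :=
  { r | (∃ ρ ∈ R, ρ.conds = [] ∧ r = uncondSRRule mOf ρ) ∨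
        (∃ ρ ∈ R, ρ.conds ≠ [] ∧ ∃ j ≤ ρ.conds.length, r = condSRRule mOf idx ρ j) ∨
        r = auxGuard ∨
        (∃ (f : F) (i : ℕ), i < ar f ∧ r = auxShift ar mOf f i) }

/-- Well-formedness of the data `(ar, mOf, idx)` describing the signature `F`
(with arities `ar`), the number `mOf f` of conditional `f`-rules of `R`, and
the ranking `idx` of the conditional rules of each defined symbol by some
arbitrary but fixed order. -/
def GoodSetup {F V : Type} [DecidableEq V] (R : CTRS F V) (ar mOf : F → ℕ)
    (idx : CRule F V → ℕ) : Prop :=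
  (∀ ρ ∈ R, ρ.lhs.WF ar ∧ ρ.rhs.WF ar ∧ ∀ c ∈ ρ.conds, c.1.WF ar ∧ c.2.WF ar) ∧
  (∀ ρ ∈ R, ∃ (f : F) (ws : List (Term F V)), ρ.lhs = Term.app f ws) ∧
  (∀ ρ ∈ R, ρ.conds ≠ [] →
     ∀ (f : F) (ws : List (Term F V)), ρ.lhs = Term.app f ws →
       1 ≤ idx ρ ∧ idx ρ ≤ mOf f) ∧
  (∀ ρ₁, ρ₁ ∈ R → ∀ ρ₂, ρ₂ ∈ R → ρ₁.conds ≠ [] → ρ₂.conds ≠ [] →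
     ∀ (f : F) (ws₁ ws₂ : List (Term F V)),
       ρ₁.lhs = Term.app f ws₁ → ρ₂.lhs = Term.app f ws₂ →
       idx ρ₁ = idx ρ₂ → ρ₁ = ρ₂) ∧
  (∀ (f : F) (i : ℕ), 1 ≤ i → i ≤ mOf f →
     ∃ ρ ∈ R, ρ.conds ≠ [] ∧ (∃ ws : List (Term F V), ρ.lhs = Term.app f ws) ∧ idx ρ = i)
/-- The unraveled system `U(R)` with its rules considered over the extended
variable set `WVar V` (so that it rewrites the terms in the image of `Φ`). -/
def USysW {F V : Type} [DecidableEq V] (R : CTRS F V) : CTRS (UF F V) (WVar V) :=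
  { r | ∃ r' ∈ USys R, r = r'.mapV Sum.inl }

/-- Membership in the set `Φ(t)`: `PhiMem R ar mOf idx t u` states that
`u ∈ Φ(t)`, where `Φ` is the mapping (defined mutually with the auxiliary
mapping `Ψ`) from reachable terms of `T(F̄,V)` to sets of terms of
`T(U_R(F),V)`:
* `Φ(x) = {x}` for a variable `x`;
* `Φ(⟨t⟩) = Φ(t)`;
* for an original symbol `f` applied to arguments `ts`, `Φ` contains
  `f(t'1,…,t'n)` for all `t'p ∈ Φ(tp)` of the first `ar f` arguments (this is
  the clause for constructors and the clause `Ψ(f̄(t⃗,⊥,…,⊥))` for defined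
  symbols), and
* for each `i`-th extra argument of a defined symbol `f` that is a tuple
  `[⟨t'⟩, t'1,…,t'_{nj}]^ρ_j` (where `ρ` is the `i`-th conditional `f`-rule),
  `Φ` contains all terms `U^ρ_j(u', u⃗')` with `u' ∈ Φ(t')` and
  `u⃗' ∈ Φ(σ(X⃗j))`, where `σ` is a substitution with `σ(V⃗j) = t'1,…,t'_{nj}`
  and `σ(ext(w1),…,ext(wn))` equal to the main arguments of the node. -/
inductive PhiMem {F V : Type} [DecidableEq V] (R : CTRS F V) (ar mOf : F → ℕ)
    (idx : CRule F V → ℕ) : STerm F V → Term (UF F V) (WVar V) → Prop where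
  | var (x : WVar V) : PhiMem R ar mOf idx (.var x) (.var x)
  | guard {t : STerm F V} {u : Term (UF F V) (WVar V)} :
      PhiMem R ar mOf idx t u → PhiMem R ar mOf idx (guardT t) u
  | orig {f : F} {ts : List (STerm F V)} {us : List (Term (UF F V) (WVar V))} :
      us.length = (ts.take (ar f)).length →
      (∀ p ∈ List.zip (ts.take (ar f)) us, PhiMem R ar mOf idx p.1 p.2) →
      PhiMem R ar mOf idx (.app (.orig f) ts) (.app (Sum.inl f) us)
  | cond {f : F} {ts : List (STerm F V)} {ρ : CRule F V} {ws : List (Term F V)}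
      {j : ℕ} {tin : STerm F V} {vargs : List (STerm F V)}
      {σ : WVar V → STerm F V} {u : Term (UF F V) (WVar V)}
      {us : List (Term (UF F V) (WVar V))} :
      ρ ∈ R → ρ.conds ≠ [] → ρ.lhs = .app f ws →
      1 ≤ j → j ≤ ρ.conds.length →
      (ts.drop (ar f))[idx ρ - 1]? = some (.app (.tup ρ j) (guardT tin :: vargs)) →
      (Vlist ρ j).map (fun v => σ (Sum.inl v)) = vargs →
      (extTList mOf ws 0).1.map (Term.subst σ) = ts.take (ar f) →
      PhiMem R ar mOf idx tin u →
      us.length = (Xlist ρ j).length →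
      (∀ p ∈ List.zip (Xlist ρ j) us, PhiMem R ar mOf idx (σ (Sum.inl p.1)) p.2) →
      PhiMem R ar mOf idx (.app (.orig f) ts) (.app (Sum.inr (ρ, j)) (u :: us))

/-- The set `Φ(t)`. -/
def Phi {F V : Type} [DecidableEq V] (R : CTRS F V) (ar mOf : F → ℕ)
    (idx : CRule F V → ℕ) (t : STerm F V) : Set (Term (UF F V) (WVar V)) :=
  { u | PhiMem R ar mOf idx t u }

/-- `σ' ∈ Φ(σ)`, the extension of `Φ` to substitutions:
`Dom(σ') ⊆ Dom(σ)` and `xσ' ∈ Φ(xσ)` for every `x ∈ Dom(σ)`. -/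
def PhiSub {F V : Type} [DecidableEq V] (R : CTRS F V) (ar mOf : F → ℕ)
    (idx : CRule F V → ℕ) (σ : WVar V → STerm F V)
    (σ' : WVar V → Term (UF F V) (WVar V)) : Prop :=
  ∀ x : WVar V, PhiMem R ar mOf idx (σ x) (σ' x)

/-- The relation `s ⇝ t`: for each `t' ∈ Φ(t)` there exists `s' ∈ Φ(s)` with
`s' →*_{U(R)} t'`. -/
def Leadsto {F V : Type} [DecidableEq V] (R : CTRS F V) (ar mOf : F → ℕ)
    (idx : CRule F V → ℕ) (s t : STerm F V) : Prop :=
  ∀ u, PhiMem R ar mOf idx t u →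
    ∃ u', PhiMem R ar mOf idx s u' ∧ RedStar (USysW R) u' u

/-- A term of `T(F̄,V)` is reachable if it is a subterm of some term reachable
by `SR(R)` from `⟨s̄⟩` for some `s ∈ T(F,V)`. -/
def SRReachable {F V : Type} [DecidableEq V] (R : CTRS F V) (ar mOf : F → ℕ)
    (idx : CRule F V → ℕ) (t : STerm F V) : Prop :=
  ∃ (s : Term F V) (C : Ctx (SSym F V) (WVar V)),
    s.WF ar ∧ RedStar (SRSys R ar mOf idx) (guardT (barT mOf s)) (C.fill t)

/-- The restriction `σ|_X` of a substitution to the variables of a term `t`. -/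
def restrictTo {F V : Type} [DecidableEq V] (σ : WVar V → STerm F V) (t : STerm F V) :
    WVar V → STerm F V :=
  fun x => if 0 < t.count x then σ x else .var x

/-! Every rule of `SR(R)` either has a right-hand side headed by `⟨·⟩`, or rewrites only the extra
arguments of its root symbol.  So, reading a reduction to `f̄(u⃗, …)` backwards, the root is `f̄`
all along and the main arguments only ever reduce in place: it starts from some `f̄(s⃗, …)` with
`sᵢ →* uᵢ`.  Descending along `w` matches the nodes of `ext(w)` one by one, its fresh variables
absorb the extra arguments, and linearity of `ext(w)` glues the matching substitutions of the
arguments. -/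

section Counting

variable {F V : Type}

theorem Term.subst_app {W : Type} (σ : V → Term F W) (f : F) (ts : List (Term F V)) :
    (app f ts).subst σ = app f (ts.map (subst σ)) := by
  simp [subst]

variable [DecidableEq V]

theorem Term.count_app (x : V) (f : F) (ts : List (Term F V)) :
    (app f ts).count x = seqCount x ts := by
  simp [count, seqCount]

theorem seqCount_cons (x : V) (t : Term F V) (ts : List (Term F V)) :
    seqCount x (t :: ts) = t.count x + seqCount x ts := by
  simp [seqCount]

theorem seqCount_append (x : V) (ts us : List (Term F V)) :
    seqCount x (ts ++ us) = seqCount x ts + seqCount x us := by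
  simp [seqCount]

theorem Term.count_le_seqCount (x : V) {t : Term F V} {ts : List (Term F V)} (h : t ∈ ts) :
    t.count x ≤ seqCount x ts :=
  List.le_sum_of_mem (List.mem_map_of_mem h)

end Counting

section Matching

variable {F V : Type} [DecidableEq V]

namespace Term

theorem subst_congr {W : Type} {σ τ : V → Term F W} :
    ∀ {t : Term F V}, (∀ x, 0 < t.count x → σ x = τ x) → t.subst σ = t.subst τ
  | .var x, h => by
      rw [subst, subst]
      exact h x (by simp [count])
  | .app f ts, h => by
      rw [subst_app, subst_app]
      congr 1
      refine List.map_congr_left fun t ht => subst_congr fun x hx => h x ?_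
      exact (count_app x f ts).symm ▸ hx.trans_le (count_le_seqCount x ht)

/-- `t` is an instance of the pattern `p`, by a substitution whose value at each variable `x` of `p`
is related to `x` by `Q`. -/
def MatchesWith (Q : V → Term F V → Prop) (t p : Term F V) : Prop :=
  ∃ σ : V → Term F V, t = p.subst σ ∧ ∀ x, 0 < p.count x → Q x (σ x)

variable {Q : V → Term F V → Prop}

theorem matchesWith_var {t : Term F V} {x : V} (h : Q x t) : MatchesWith Q t (var x) := by
  refine ⟨fun _ => t, by rw [subst], fun y hy => ?_⟩
  obtain rfl : x = y := by by_contra hne; simp [count, hne] at hy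
  exact h

theorem exists_subst_of_forall₂_matchesWith {ts ps : List (Term F V)}
    (hlin : ∀ x, seqCount x ps ≤ 1) (h : List.Forall₂ (MatchesWith Q) ts ps) :
    ∃ σ : V → Term F V, ts = ps.map (subst σ) ∧ ∀ x, 0 < seqCount x ps → Q x (σ x) := by
  induction h with
  | nil => exact ⟨var, rfl, by simp [seqCount]⟩
  | @cons t p ts ps hhead _ ih =>
    simp only [seqCount_cons] at hlin ⊢
    obtain ⟨σ₁, rfl, hσ₁⟩ := hhead
    obtain ⟨σ₂, rfl, hσ₂⟩ := ih fun x => (Nat.le_add_left _ _).trans (hlin x)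
    let σ : V → Term F V := fun x => if 0 < p.count x then σ₁ x else σ₂ x
    have hσ_head : ∀ x, 0 < p.count x → σ₁ x = σ x := fun x hx => (if_pos hx).symm
    have hσ_tail : ∀ x, 0 < seqCount x ps → σ₂ x = σ x := fun x hx =>
      (if_neg (by have := hlin x; omega)).symm
    refine ⟨σ, ?_, fun x hx => ?_⟩
    · rw [List.map_cons, subst_congr hσ_head]
      congr 1
      exact List.map_congr_left fun q hq =>
        subst_congr fun x hx => hσ_tail x (hx.trans_le (count_le_seqCount x hq))
    · by_cases hp : 0 < p.count x
      · exact hσ_head x hp ▸ hσ₁ x hp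
      · have hps : 0 < seqCount x ps := by omega
        exact hσ_tail x hps ▸ hσ₂ x hps

theorem Linear.matchesWith_app {f : F} {ts ps : List (Term F V)} (hlin : (app f ps).Linear)
    (h : List.Forall₂ (MatchesWith Q) ts ps) : MatchesWith Q (app f ts) (app f ps) := by
  simp only [Linear, count_app] at hlin
  obtain ⟨σ, rfl, hσ⟩ := exists_subst_of_forall₂_matchesWith hlin h
  exact ⟨σ, (subst_app σ f ps).symm, by simpa only [count_app] using hσ⟩

theorem Linear.of_mem {f : F} {t : Term F V} {ts : List (Term F V)} (hlin : (app f ts).Linear)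
    (ht : t ∈ ts) : t.Linear := fun x =>
  (count_le_seqCount x ht).trans (count_app x f ts ▸ hlin x)

end Term

end Matching

section ExtPattern

variable {F V : Type}

/-- The block of extra arguments that `ext` attaches to a defined symbol: the `m` fresh variables
numbered from `c`. -/
def freshVars (c m : ℕ) : List (STerm F V) :=
  (List.range m).map fun k => .var (Sum.inr (c + k))

theorem extT_app (mOf : F → ℕ) (f : F) (ws : List (Term F V)) (c : ℕ) :
    extT mOf (.app f ws) c =
      (.app (.orig f) ((extTList mOf ws c).1 ++ freshVars (extTList mOf ws c).2 (mOf f)),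
        (extTList mOf ws c).2 + mOf f) := by
  rw [extT, freshVars]

theorem length_extTList (mOf : F → ℕ) (ws : List (Term F V)) (c : ℕ) :
    (extTList mOf ws c).1.length = ws.length := by
  induction ws generalizing c with
  | nil => simp [extTList]
  | cons w ws ih => simp only [extTList, List.length_cons, ih]

mutual

theorem le_extT_snd (mOf : F → ℕ) : ∀ (w : Term F V) (c : ℕ), c ≤ (extT mOf w c).2
  | .var _, c => by rw [extT]
  | .app f ws, c => by
      rw [extT_app]
      exact (le_extTList_snd mOf ws c).trans (Nat.le_add_right _ _)

theorem le_extTList_snd (mOf : F → ℕ) :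
    ∀ (ws : List (Term F V)) (c : ℕ), c ≤ (extTList mOf ws c).2
  | [], c => by rw [extTList]
  | w :: ws, c => by
      rw [extTList]
      exact (le_extT_snd mOf w c).trans (le_extTList_snd mOf ws _)

end

variable [DecidableEq V]

theorem seqCount_inl_freshVars (x : V) (c m : ℕ) :
    seqCount (Sum.inl x) (freshVars (F := F) c m) = 0 := by
  simp [freshVars, seqCount, Term.count, Function.comp_def]

theorem seqCount_inr_freshVars (k c m : ℕ) :
    seqCount (Sum.inr k) (freshVars (F := F) (V := V) c m) =
      if c ≤ k ∧ k < c + m then 1 else 0 := by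
  induction m with
  | zero => simp [freshVars, seqCount]
  | succ m ih =>
    rw [freshVars, List.range_succ, List.map_append, ← freshVars, seqCount_append, ih]
    simp only [List.map_cons, List.map_nil, seqCount, List.sum_cons, List.sum_nil, Term.count,
      Sum.inr.injEq]
    split_ifs <;> omega

mutual

theorem count_inl_extT (mOf : F → ℕ) (x : V) :
    ∀ (w : Term F V) (c : ℕ), (extT mOf w c).1.count (Sum.inl x) = w.count x
  | .var y, c => by simp [extT, Term.count]
  | .app f ws, c => by
      rw [extT_app, Term.count_app, Term.count_app, seqCount_append, seqCount_inl_freshVars,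
        seqCount_inl_extTList mOf x ws c, Nat.add_zero]

theorem seqCount_inl_extTList (mOf : F → ℕ) (x : V) :
    ∀ (ws : List (Term F V)) (c : ℕ),
      seqCount (Sum.inl x) (extTList mOf ws c).1 = seqCount x ws
  | [], c => by simp [extTList, seqCount]
  | w :: ws, c => by
      rw [extTList, seqCount_cons, seqCount_cons, count_inl_extT mOf x w c,
        seqCount_inl_extTList mOf x ws _]

end

mutual

theorem count_inr_extT (mOf : F → ℕ) (k : ℕ) :
    ∀ (w : Term F V) (c : ℕ),
      (extT mOf w c).1.count (Sum.inr k) = if c ≤ k ∧ k < (extT mOf w c).2 then 1 else 0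
  | .var y, c => by simp [extT, Term.count, show ¬(c ≤ k ∧ k < c) by omega]
  | .app f ws, c => by
      have hmono := le_extTList_snd mOf ws c
      rw [extT_app, Term.count_app, seqCount_append, seqCount_inr_freshVars,
        seqCount_inr_extTList mOf k ws c]
      split_ifs <;> omega

theorem seqCount_inr_extTList (mOf : F → ℕ) (k : ℕ) :
    ∀ (ws : List (Term F V)) (c : ℕ),
      seqCount (Sum.inr k) (extTList mOf ws c).1 =
        if c ≤ k ∧ k < (extTList mOf ws c).2 then 1 else 0
  | [], c => by simp [extTList, seqCount, show ¬(c ≤ k ∧ k < c) by omega]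
  | w :: ws, c => by
      have hmono_head := le_extT_snd mOf w c
      have hmono_tail := le_extTList_snd mOf ws (extT mOf w c).2
      rw [extTList, seqCount_cons, count_inr_extT mOf k w c, seqCount_inr_extTList mOf k ws _]
      split_ifs <;> omega

end

theorem Term.Linear.extT {w : Term F V} (hlin : w.Linear) (mOf : F → ℕ) (c : ℕ) :
    (extT mOf w c).1.Linear
  | .inl x => count_inl_extT mOf x w c ▸ hlin x
  | .inr k => by
      rw [count_inr_extT]
      split_ifs <;> omega

end ExtPattern

section Reduction

variable {F V : Type}

instance (R : CTRS F V) : Std.Refl (RedStar R) := ⟨fun _ => .refl⟩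

theorem forall₂_trans {α : Type*} {r : α → α → Prop} [IsTrans α r] {as bs cs : List α}
    (h : List.Forall₂ r as bs) (h' : List.Forall₂ r bs cs) : List.Forall₂ r as cs := by
  induction h generalizing cs with
  | nil => exact h'
  | cons hab _ ih =>
    cases h' with
    | cons hbc htail => exact .cons (_root_.trans hab hbc) (ih htail)

instance (R : CTRS F V) : IsTrans (Term F V) (RedStar R) := ⟨fun _ _ _ => .trans⟩

theorem Red.root_or_arg {R : CTRS F V} {s : Term F V} {f : F} {us : List (Term F V)}
    (h : Red R s (.app f us)) :
    (∃ ρ ∈ R, ∃ σ, s = ρ.lhs.subst σ ∧ .app f us = ρ.rhs.subst σ) ∨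
      ∃ ss, s = .app f ss ∧ List.Forall₂ (RedStar R) ss us := by
  obtain ⟨n, h⟩ := h
  cases n with
  | zero => exact h.elim
  | succ n =>
    rw [LevelStep] at h
    generalize hu : Term.app f us = u at h
    cases h with
    | root h =>
      obtain ⟨ρ, hρ, σ, hs, ht, -⟩ := h
      exact .inl ⟨ρ, hρ, σ, hs, hu ▸ ht⟩
    | congr h =>
      obtain ⟨rfl, rfl⟩ := Term.app.inj hu
      exact .inr ⟨_, rfl, List.rel_append (List.forall₂_refl _)
        (.cons (.single ⟨n + 1, h⟩) (List.forall₂_refl _))⟩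

end Reduction

section SRReduction

variable {F V : Type}

/-- `t` is a function symbol applied to as many arguments as its arity; nothing is required of the
arguments. -/
def Term.HasRootArity (ar : F → ℕ) (t : Term F V) : Prop :=
  ∃ f ts, t = .app f ts ∧ ts.length = ar f

variable [DecidableEq V] {R : CTRS F V} {ar mOf : F → ℕ} {idx : CRule F V → ℕ}

theorem GoodSetup.hasRootArity_lhs (hS : GoodSetup R ar mOf idx) {ρ : CRule F V} (hρ : ρ ∈ R) :
    ρ.lhs.HasRootArity ar := by
  obtain ⟨f, ws, hl⟩ := hS.2.1 ρ hρ
  have hwf := (hS.1 ρ hρ).1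
  rw [hl] at hwf
  cases hwf with
  | app _ _ hlen _ => exact ⟨f, ws, hl, hlen⟩

theorem condSRRule_rhs_guard_or_extra_args (mOf : F → ℕ) (idx : CRule F V → ℕ) {ρ : CRule F V}
    {f : F} {ws : List (Term F V)} (hl : ρ.lhs = .app f ws) (j : ℕ) :
    (∃ u, (condSRRule mOf idx ρ j).rhs = guardT u) ∨
      ∃ es es', es.length = es'.length ∧
        (condSRRule mOf idx ρ j).lhs = .app (.orig f) ((extTList mOf ws 0).1 ++ es) ∧
        (condSRRule mOf idx ρ j).rhs = .app (.orig f) ((extTList mOf ws 0).1 ++ es') := by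
  simp only [condSRRule, hl]
  by_cases hjk : j = ρ.conds.length
  · exact .inl ⟨_, if_pos hjk⟩
  · simp only [if_neg hjk]
    refine .inr ?_
    by_cases hj0 : j = 0
    · simp only [if_pos hj0]
      exact ⟨_, _, by simp only [List.length_map], rfl, rfl⟩
    · simp only [if_neg hj0]
      exact ⟨_, _, by simp only [List.length_map], rfl, rfl⟩

theorem SRSys_rhs_guard_or_extra_args
    (hR : ∀ ρ ∈ R, ρ.conds ≠ [] → ρ.lhs.HasRootArity ar)
    {r : CRule (SSym F V) (WVar V)} (hr : r ∈ SRSys R ar mOf idx) :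
    (∃ u, r.rhs = guardT u) ∨
      ∃ f ps es es', ps.length = ar f ∧ es.length = es'.length ∧
        r.lhs = .app (.orig f) (ps ++ es) ∧ r.rhs = .app (.orig f) (ps ++ es') := by
  rcases hr with ⟨ρ, -, -, rfl⟩ | ⟨ρ, hρ, hcond, j, -, rfl⟩ | rfl | ⟨f, i, -, rfl⟩
  · exact .inl ⟨_, rfl⟩
  · obtain ⟨f, ws, hl, hlen⟩ := hR ρ hρ hcond
    refine (condSRRule_rhs_guard_or_extra_args mOf idx hl j).imp_right ?_
    rintro ⟨es, es', hes, hlhs, hrhs⟩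
    exact ⟨f, _, es, es', (length_extTList mOf ws 0).trans hlen, hes, hlhs, hrhs⟩
  · exact .inl ⟨_, rfl⟩
  · exact .inl ⟨_, rfl⟩

theorem Red.exists_orig (hR : ∀ ρ ∈ R, ρ.conds ≠ [] → ρ.lhs.HasRootArity ar)
    {s : STerm F V} {f : F} {us : List (STerm F V)}
    (h : Red (SRSys R ar mOf idx) s (.app (.orig f) us)) :
    ∃ ss, s = .app (.orig f) ss ∧ ss.length = us.length ∧
      List.Forall₂ (RedStar (SRSys R ar mOf idx)) (ss.take (ar f)) (us.take (ar f)) := by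
  rcases h.root_or_arg with ⟨r, hr, σ, rfl, hrhs⟩ | ⟨ss, rfl, hss⟩
  · rcases SRSys_rhs_guard_or_extra_args hR hr with
      ⟨u, hu⟩ | ⟨g, ps, es, es', hps, hes, hl, hr⟩
    · simp [hu, guardT, Term.subst_app] at hrhs
    · rw [hr, Term.subst_app, Term.app.injEq, SSym.orig.injEq] at hrhs
      obtain ⟨rfl, rfl⟩ := hrhs
      refine ⟨_, hl ▸ Term.subst_app .., by simp [hes], ?_⟩
      have hlen : (ps.map (Term.subst σ)).length = ar f := by rw [List.length_map, hps]
      rw [List.map_append, List.map_append, List.take_left' hlen, List.take_left' hlen]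
      exact List.forall₂_refl _
  · exact ⟨ss, rfl, hss.length_eq, List.forall₂_take _ hss⟩

theorem RedStar.exists_orig (hR : ∀ ρ ∈ R, ρ.conds ≠ [] → ρ.lhs.HasRootArity ar)
    {s : STerm F V} {f : F} {us : List (STerm F V)}
    (h : RedStar (SRSys R ar mOf idx) s (.app (.orig f) us)) :
    ∃ ss, s = .app (.orig f) ss ∧ ss.length = us.length ∧
      List.Forall₂ (RedStar (SRSys R ar mOf idx)) (ss.take (ar f)) (us.take (ar f)) := by
  induction h using Relation.ReflTransGen.head_induction_on with
  | refl => exact ⟨us, rfl, rfl, List.forall₂_refl _⟩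
  | head hstep _ ih =>
    obtain ⟨ss, rfl, hlen, hargs⟩ := ih
    obtain ⟨ss', rfl, hlen', hargs'⟩ := hstep.exists_orig hR
    exact ⟨ss', rfl, hlen'.trans hlen, forall₂_trans hargs' hargs⟩

end SRReduction

section Lifting

variable {F V : Type} [DecidableEq V]

theorem forall₂_matchesWith_freshVars {Q : WVar V → STerm F V → Prop}
    (hQ : ∀ k t, Q (Sum.inr k) t) (c : ℕ) {m : ℕ} {ts : List (STerm F V)} (hlen : ts.length = m) :
    List.Forall₂ (Term.MatchesWith Q) ts (freshVars c m) := by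
  refine List.forall₂_iff_get.2 ⟨by simp [freshVars, hlen], fun i hi hi' => ?_⟩
  simpa [freshVars] using Term.matchesWith_var (hQ (c + i) ts[i])

variable {R : CTRS F V} {ar mOf : F → ℕ} {idx : CRule F V → ℕ}

/-- The requirement on `xσ` for lifting a reduction to `w'θ`: it reduces to `xθ` for the variables
`x` of `w`; the fresh variables of `w' = ext(w)` are unconstrained. -/
def ReducesAtOriginal (S : CTRS (SSym F V) (WVar V)) (θ : WVar V → STerm F V) :
    WVar V → STerm F V → Prop
  | .inl x, t => RedStar S t (θ (.inl x))
  | .inr _, _ => True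

mutual

theorem matchesWith_extT (hR : ∀ ρ ∈ R, ρ.conds ≠ [] → ρ.lhs.HasRootArity ar)
    (θ : WVar V → STerm F V) :
    ∀ (w : Term F V) (c : ℕ) (t : STerm F V), w.WF ar → w.Linear →
      RedStar (SRSys R ar mOf idx) t ((extT mOf w c).1.subst θ) →
      t.MatchesWith (ReducesAtOriginal (SRSys R ar mOf idx) θ) (extT mOf w c).1
  | .var x, c, t, _, _, h => by
      rw [extT] at h ⊢
      rw [Term.subst] at h
      exact Term.matchesWith_var h
  | .app f ws, c, t, .app _ _ harity hwf, hlin, h => by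
      have hlen : ((extTList mOf ws c).1.map (Term.subst θ)).length = ar f := by
        rw [List.length_map, length_extTList, harity]
      have hlinExt := hlin.extT mOf c
      rw [extT_app] at h hlinExt ⊢
      rw [Term.subst_app, List.map_append] at h
      obtain ⟨ss, rfl, hss, hargs⟩ := h.exists_orig hR
      rw [List.take_left' hlen] at hargs
      have hextra : (ss.drop (ar f)).length = mOf f := by
        simp [hss, hlen, freshVars]
      refine hlinExt.matchesWith_app ?_
      rw [← List.take_append_drop (ar f) ss]
      exact List.rel_append
        (forall₂_matchesWith_extTList hR θ ws c _ hwf (fun w hw => hlin.of_mem hw) hargs)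
        (forall₂_matchesWith_freshVars (fun _ _ => trivial) _ hextra)

theorem forall₂_matchesWith_extTList (hR : ∀ ρ ∈ R, ρ.conds ≠ [] → ρ.lhs.HasRootArity ar)
    (θ : WVar V → STerm F V) :
    ∀ (ws : List (Term F V)) (c : ℕ) (ts : List (STerm F V)),
      (∀ w ∈ ws, w.WF ar) → (∀ w ∈ ws, w.Linear) →
      List.Forall₂ (RedStar (SRSys R ar mOf idx)) ts
        ((extTList mOf ws c).1.map (Term.subst θ)) →
      List.Forall₂ (Term.MatchesWith (ReducesAtOriginal (SRSys R ar mOf idx) θ)) ts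
        (extTList mOf ws c).1
  | [], c, ts, _, _, h => by
      rw [extTList] at h ⊢
      exact List.forall₂_nil_right_iff.2 (List.forall₂_nil_right_iff.1 h)
  | w :: ws, c, ts, hwf, hlin, h => by
      rw [extTList] at h ⊢
      rw [List.forall_mem_cons] at hwf hlin
      cases h with
      | cons hhead htail =>
        exact .cons (matchesWith_extT hR θ w c _ hwf.1 hlin.1 hhead)
          (forall₂_matchesWith_extTList hR θ ws _ _ hwf.2 hlin.2 htail)

end

theorem SR_pattern_lifting_general (hR : ∀ ρ ∈ R, ρ.conds ≠ [] → ρ.lhs.HasRootArity ar)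
    {t : STerm F V} {w : Term F V} (hwWF : w.WF ar) (hwlin : w.Linear) (c : ℕ)
    {θ : WVar V → STerm F V}
    (h : RedStar (SRSys R ar mOf idx) t ((extT mOf w c).1.subst θ)) :
    ∃ σ : WVar V → STerm F V,
      t = (extT mOf w c).1.subst σ ∧
      ∀ x : V, 0 < w.count x →
        RedStar (SRSys R ar mOf idx) (σ (Sum.inl x)) (θ (Sum.inl x)) := by
  obtain ⟨σ, ht, hσ⟩ := matchesWith_extT hR θ w c t hwWF hwlin h
  exact ⟨σ, ht, fun x hx => hσ (Sum.inl x) (by rwa [count_inl_extT])⟩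

end Lifting

/-- **Lemma (matching linear `ext`-patterns along `SR(R)`-reduction).**
Let `R` be a `U`-WLL DCTRS over `F`, `t` a reachable term in `T(F̄,V)`, `w` a
linear term in `T(F,V)`, `w' = ext(w)`, and `θ` a substitution over `F̄`.
If `t →*_{SR(R)} w'θ`, then there exists a substitution `σ` such that
`t = w'σ` and `xσ →*_{SR(R)} xθ` for all variables `x ∈ Var(w)`. -/
theorem SR_pattern_lifting {F V : Type} [DecidableEq V]
    (R : CTRS F V) (ar mOf : F → ℕ) (idx : CRule F V → ℕ)
    (hS : GoodSetup R ar mOf idx) (hD : IsDCTRS R) (hU : IsUWLL R)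
    (t : STerm F V) (ht : SRReachable R ar mOf idx t)
    (w : Term F V) (hwWF : w.WF ar) (hwlin : w.Linear)
    (θ : WVar V → STerm F V)
    (h : RedStar (SRSys R ar mOf idx) t ((extT mOf w 0).1.subst θ)) :
    ∃ σ : WVar V → STerm F V,
      t = (extT mOf w 0).1.subst σ ∧
      ∀ x : V, 0 < w.count x →
        RedStar (SRSys R ar mOf idx) (σ (Sum.inl x)) (θ (Sum.inl x)) :=
  SR_pattern_lifting_general (fun _ hρ _ => hS.hasRootArity_lhs hρ) hwWF hwlin 0 h
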